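/- Let Δ be a Fano simplex of dimension d = 3 and Gorenstein index g ∈ {1,2}. Then mult(Δ) ≤ 16g², and equality holds if and only if Δ ≅ Δ(P) where P is the 3×4 integer matrix with columns (1,0,0), (4g−3, 4g, 0), (4g−3, 0, 4g), (5−8g, −4g, −4g). -/

import Mathlib

open Finset Pointwise

/-- Cast an integer vector to a rational vector. -/
def toQ {d : ℕ} (v : Fin d → ℤ) : Fin d → ℚ := fun j => (v j : ℚ)

/-- An integer vector is primitive if the gcd of its entries is 1. -/
def IsPrimitive {d : ℕ} (v : Fin d → ℤ) : Prop := Finset.univ.gcd v = 1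

/-- The origin lies in the interior of the simplex with the given vertices,
i.e. the origin is a convex combination of the vertices with positive coefficients. -/
def OriginInInterior {d : ℕ} (v : Fin (d + 1) → Fin d → ℚ) : Prop :=
  ∃ w : Fin (d + 1) → ℚ, (∀ i, 0 < w i) ∧ ∑ i, w i = 1 ∧ ∀ j, ∑ i, w i * v i j = 0

/-- A Fano simplex, given by its tuple of vertices: the vertices are primitive integer
vectors, affinely independent, and the origin lies in the interior. -/
def IsFanoSimplex {d : ℕ} (v : Fin (d + 1) → Fin d → ℤ) : Prop :=
  AffineIndependent ℚ (fun i => toQ (v i)) ∧ (∀ i, IsPrimitive (v i)) ∧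
    OriginInInterior fun i => toQ (v i)

/-- The simplex spanned by the given vertices. -/
def simplexHull {d : ℕ} (v : Fin (d + 1) → Fin d → ℚ) : Set (Fin d → ℚ) :=
  convexHull ℚ (Set.range v)

/-- The dual body `Δ* = {u : ⟨u,v⟩ ≥ -1 for all v ∈ Δ}`. -/
def dualBody {d : ℕ} (S : Set (Fin d → ℚ)) : Set (Fin d → ℚ) :=
  {u | ∀ x ∈ S, -1 ≤ ∑ j, u j * x j}

/-- A set is a lattice polytope iff it is the convex hull of its integral points
(equivalently, all its vertices are lattice points). -/
def IsLatticeSet {d : ℕ} (S : Set (Fin d → ℚ)) : Prop :=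
  S = convexHull ℚ {x ∈ S | ∀ j, ∃ z : ℤ, x j = (z : ℚ)}

/-- The Gorenstein index: the least positive integer `g` such that `g • Δ*` is a
lattice polytope. -/
noncomputable def gorensteinIndex {d : ℕ} (v : Fin (d + 1) → Fin d → ℚ) : ℕ :=
  sInf {g : ℕ | 0 < g ∧ IsLatticeSet ((g : ℚ) • dualBody (simplexHull v))}

/-- The normalized volume `d! · vol(Δ)` of the simplex with the given vertices. -/
def normVol {d : ℕ} (v : Fin (d + 1) → Fin d → ℚ) : ℚ :=
  |(Matrix.of fun i j : Fin d => v i.succ j - v 0 j).det|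

/-- Two (Fano) simplices, given by their vertex tuples, are isomorphic iff some
unimodular integer matrix maps the vertex set of one onto the vertex set of the other. -/
def IsIsomorphicTo {d : ℕ} (v w : Fin (d + 1) → Fin d → ℤ) : Prop :=
  ∃ (U : Matrix (Fin d) (Fin d) ℤ) (σ : Equiv.Perm (Fin (d + 1))),
    IsUnit U.det ∧ ∀ i, U.mulVec (v i) = w (σ i)


/-- The multiplicity of a Fano simplex: the index in `ℤ^d` of the sublattice
generated by the vertices. -/
noncomputable def multOf {d : ℕ} (v : Fin (d + 1) → Fin d → ℤ) : ℕ :=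
  (AddSubgroup.closure (Set.range v)).index

/-!
Let `h i` be the vertices of `g • Δ*`, the point `h i` being opposite to the facet dual to the
vertex `v i` of `Δ`, at lattice distance `A i` from it. With `q i = lcm A / A i` and `W = ∑ i, q i`,
one has `∑ i, q i • v i = ∑ i, q i • h i = 0` and `lcm A = g * W`. Placing `g • Δ*` at height `g`
and `Δ` at height `1` turns duality into a product of two square matrices equal to `diagonal A`;
taking determinants gives `mult Δ * mult (g • Δ*) * ∏ i, q i = g * (g * W) ^ (d - 1)`.

For `g = 1` or `g` prime, some `A j` is divisible by `g`. All `h i` then pair with the primitive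
vector `v j` to multiples of `g`, so `g` divides `mult (g • Δ*)`. On the other hand each `q i`
divides `g * W`, and for `g < d` this forces `W ^ 2 ≤ (d + 1) ^ 2 * ∏ i, q i`, strictly unless all
`q i` are `1`. In dimension three the two facts combine to `mult Δ ≤ 16 * g ^ 2`.

In the case of equality all `A i` are `4 * g`, the `h i` sum to zero and `mult (g • Δ*) = g`. After
a relabelling, `(h 0 + 2 • h 3) / g` is then a lattice point; for `g = 2` this is a parity argument.
Together with the `h i` it yields the rows of an integral matrix mapping `Δ` onto the model simplex,
and this matrix is unimodular because both simplices have the same multiplicity.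
-/

open Matrix

section LatticeIndex

theorem mem_closure_range_row_iff {m n : Type*} [Fintype m] (M : Matrix m n ℤ) (x : n → ℤ) :
    x ∈ AddSubgroup.closure (Set.range M.row) ↔ ∃ a, a ᵥ* M = x := by
  rw [AddSubgroup.mem_closure_range_iff_of_fintype]
  simp only [vecMul_eq_sum, eq_comm, row]

variable {n : Type*} [Fintype n] [DecidableEq n]

theorem index_closure_range_row_of_det_eq_zero {M : Matrix n n ℤ} (hM : M.det = 0) :
    (AddSubgroup.closure (Set.range M.row)).index = 0 := by
  set k := (AddSubgroup.closure (Set.range M.row)).index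
  have hmem (x : n → ℤ) : ∃ a, a ᵥ* M = k • x :=
    (mem_closure_range_row_iff M _).1 (AddSubgroup.nsmul_index_mem _ x)
  choose X hX using fun i => hmem (Pi.single i 1)
  have hXM : of X * M = (k : ℤ) • 1 := by
    ext i j
    change (X i ᵥ* M) j = _
    simp [hX i, one_apply, Pi.single_apply, eq_comm]
  have hdet := congrArg det hXM
  rw [det_mul, hM, mul_zero, det_smul, det_one, mul_one, eq_comm] at hdet
  exact_mod_cast eq_zero_of_pow_eq_zero hdet

theorem index_closure_range_row (M : Matrix n n ℤ) :
    (AddSubgroup.closure (Set.range M.row)).index = M.det.natAbs := by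
  by_cases hM : M.det = 0
  · rw [index_closure_range_row_of_det_eq_zero hM, hM, Int.natAbs_zero]
  have hli : LinearIndependent ℤ M.row := linearIndependent_rows_of_det_ne_zero hM
  rw [← Submodule.span_int_eq_addSubgroupClosure,
    AddSubgroup.index_eq_natAbs_det (Pi.basisFun ℤ n) _ (Module.Basis.span hli),
    Module.Basis.det_apply, ← det_transpose]
  congr 2
  ext i j
  exact congrFun (congrArg Subtype.val (Module.Basis.span_apply hli i)) j

theorem index_range_mulVec (U : Matrix n n ℤ) :
    U.mulVecLin.toAddMonoidHom.range.index = U.det.natAbs := by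
  rw [← det_transpose, ← index_closure_range_row]
  congr 1
  ext x
  rw [AddMonoidHom.mem_range, mem_closure_range_row_iff]
  simp [vecMul_transpose]

end LatticeIndex

theorem multOf_mulVec {d : ℕ} (U : Matrix (Fin d) (Fin d) ℤ) (v : Fin (d + 1) → Fin d → ℤ) :
    multOf (fun i => U *ᵥ v i) = multOf v * U.det.natAbs := by
  set f : (Fin d → ℤ) →+ (Fin d → ℤ) := U.mulVecLin.toAddMonoidHom
  have hmap : AddSubgroup.closure (Set.range fun i => U *ᵥ v i) =
      (AddSubgroup.closure (Set.range v)).map f := by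
    rw [AddMonoidHom.map_closure, ← Set.range_comp]
    rfl
  have hrange : f.range.index = U.det.natAbs := index_range_mulVec U
  rw [multOf, hmap, multOf]
  by_cases hU : U.det = 0
  · rw [AddSubgroup.index_map, hrange, hU, Int.natAbs_zero, mul_zero, mul_zero]
  · rw [AddSubgroup.index_map_of_injective _ (mulVec_injective_of_det_ne_zero hU), hrange]

theorem multOf_comp_perm {d : ℕ} (v : Fin (d + 1) → Fin d → ℤ) (σ : Equiv.Perm (Fin (d + 1))) :
    multOf (v ∘ σ) = multOf v := by
  rw [multOf, σ.surjective.range_comp, multOf]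

theorem IsIsomorphicTo.multOf_eq {d : ℕ} {v w : Fin (d + 1) → Fin d → ℤ}
    (h : IsIsomorphicTo v w) : multOf v = multOf w := by
  obtain ⟨U, σ, hU, hv⟩ := h
  rw [← multOf_comp_perm w σ, show w ∘ σ = fun i => U *ᵥ v i from (funext hv).symm, multOf_mulVec,
    Int.isUnit_iff_natAbs_eq.1 hU, mul_one]

theorem isIsomorphicTo_of_multOf_eq {d : ℕ} {v w : Fin (d + 1) → Fin d → ℤ}
    (U : Matrix (Fin d) (Fin d) ℤ) (σ : Equiv.Perm (Fin (d + 1)))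
    (hU : ∀ i, U *ᵥ v (σ i) = w i) (h : multOf v = multOf w) (hv : multOf v ≠ 0) :
    IsIsomorphicTo v w := by
  have hdet : multOf v * U.det.natAbs = multOf v * 1 := by
    rw [mul_one, ← multOf_comp_perm v σ, ← multOf_mulVec, multOf_comp_perm v σ, h]
    exact congrArg multOf (funext hU)
  refine ⟨U, σ.symm, Int.isUnit_iff_natAbs_eq.2 (Nat.eq_of_mul_eq_mul_left hv.bot_lt hdet),
    fun i => ?_⟩
  rw [← hU, σ.apply_symm_apply]

section Homogenization

variable {d : ℕ}

/-- The square matrix with rows `(c i, v i)`; for `c = 1` these are the vertices of a simplex placed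
at height one, so that its determinant is, up to sign, the normalized volume. -/
def homogenization (c : Fin (d + 1) → ℤ) (v : Fin (d + 1) → Fin d → ℤ) :
    Matrix (Fin (d + 1)) (Fin (d + 1)) ℤ :=
  of fun i => Fin.cons (c i) (v i)

theorem vecMul_homogenization (q c : Fin (d + 1) → ℤ) (v : Fin (d + 1) → Fin d → ℤ) :
    q ᵥ* homogenization c v = Fin.cons (q ⬝ᵥ c) (q ᵥ* of v) := by
  ext j
  cases j using Fin.cases <;> simp [homogenization, vecMul, dotProduct]

theorem homogenization_mul_transpose (a b : Fin (d + 1) → ℤ) (v w : Fin (d + 1) → Fin d → ℤ)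
    (i j : Fin (d + 1)) :
    (homogenization a v * (homogenization b w)ᵀ) i j = a i * b j + v i ⬝ᵥ w j := by
  simp [homogenization, mul_apply, Fin.sum_univ_succ, dotProduct]

variable {q m : Fin (d + 1) → ℤ} {v : Fin (d + 1) → Fin d → ℤ}

/- Since `q ᵥ* (m, v) = (1, 0)`, the rows `(m i, v i)` generate `ℤ × L`, where `L` is the lattice
generated by the `v i`. -/
theorem natAbs_det_homogenization_of_dotProduct_eq_one (hv : q ᵥ* of v = 0) (hm : q ⬝ᵥ m = 1) :
    (homogenization m v).det.natAbs = multOf v := by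
  let tail : (Fin (d + 1) → ℤ) →+ (Fin d → ℤ) := (LinearMap.funLeft ℤ ℤ Fin.succ).toAddMonoidHom
  have htail : Function.Surjective tail :=
    LinearMap.funLeft_surjective_of_injective ℤ ℤ _ (Fin.succ_injective d)
  have hcomap : AddSubgroup.closure (Set.range (homogenization m v).row) =
      (AddSubgroup.closure (Set.range (of v).row)).comap tail := by
    ext x
    rw [AddSubgroup.mem_comap, mem_closure_range_row_iff, mem_closure_range_row_iff]
    constructor
    · rintro ⟨a, rfl⟩
      exact ⟨a, by rw [vecMul_homogenization]; rfl⟩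
    · rintro ⟨a, ha⟩
      refine ⟨a + (x 0 - a ⬝ᵥ m) • q, ?_⟩
      rw [vecMul_homogenization, add_vecMul, smul_vecMul, hv, smul_zero, add_zero, ha,
        add_dotProduct, smul_dotProduct, hm, smul_eq_mul, mul_one, add_sub_cancel]
      exact Fin.cons_self_tail x
  rw [← index_closure_range_row, hcomap, AddSubgroup.index_comap_of_surjective _ htail]
  rfl

theorem det_homogenization_of_dotProduct_eq_one (hv : q ᵥ* of v = 0) (hm : q ⬝ᵥ m = 1)
    (c : Fin (d + 1) → ℤ) :
    (homogenization c v).det = (q ⬝ᵥ c) * (homogenization m v).det := by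
  have hq : q ≠ 0 := by
    rintro rfl
    simp at hm
  have hupdate (b : Fin (d + 1) → ℤ) :
      homogenization b v = (homogenization m v).updateCol 0 b := by
    ext i j
    cases j using Fin.cases <;> simp [homogenization]
  have hdegenerate : (homogenization (c - (q ⬝ᵥ c) • m) v).det = 0 := by
    refine exists_vecMul_eq_zero_iff.1 ⟨q, hq, ?_⟩
    rw [vecMul_homogenization, hv, dotProduct_sub, dotProduct_smul, hm, smul_eq_mul, mul_one,
      sub_self]
    exact Fin.cons_self_tail 0
  calc (homogenization c v).det
      = (homogenization ((q ⬝ᵥ c) • m + (c - (q ⬝ᵥ c) • m)) v).det := by rw [add_sub_cancel]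
    _ = (homogenization ((q ⬝ᵥ c) • m) v).det := by
      rw [hupdate, det_updateCol_add, ← hupdate, ← hupdate, hdegenerate, add_zero]
    _ = (q ⬝ᵥ c) * (homogenization m v).det := by
      rw [hupdate, det_updateCol_smul, ← hupdate]

theorem natAbs_det_homogenization (hv : q ᵥ* of v = 0) (hq : univ.gcd q = 1)
    (c : Fin (d + 1) → ℤ) :
    (homogenization c v).det.natAbs = (q ⬝ᵥ c).natAbs * multOf v := by
  obtain ⟨m, hm⟩ := Finset.gcd_eq_sum_mul univ q
  have hqm : q ⬝ᵥ m = 1 := hm.symm.trans hq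
  rw [det_homogenization_of_dotProduct_eq_one hv hqm, Int.natAbs_mul,
    natAbs_det_homogenization_of_dotProduct_eq_one hv hqm]

end Homogenization

section Weights

variable {ι : Type*} [Fintype ι] {A : ι → ℕ}

/-- The coprime positive integers inversely proportional to `A`. When `A` measures the heights of a
scaled dual simplex, these are the weights of the associated fake weighted projective space. -/
def reducedWeight (A : ι → ℕ) (i : ι) : ℕ := univ.lcm A / A i

theorem mul_reducedWeight (A : ι → ℕ) (i : ι) : A i * reducedWeight A i = univ.lcm A :=
  Nat.mul_div_cancel' (Finset.dvd_lcm (mem_univ i))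

theorem lcm_pos_of_pos (hA : ∀ i, 0 < A i) : 0 < univ.lcm A :=
  Nat.pos_of_ne_zero fun h => by
    obtain ⟨i, -, hi⟩ := Finset.lcm_eq_zero_iff.1 h
    exact (hA i).ne' hi

theorem reducedWeight_pos (hA : ∀ i, 0 < A i) (i : ι) : 0 < reducedWeight A i :=
  Nat.pos_of_mul_pos_left ((mul_reducedWeight A i).symm ▸ lcm_pos_of_pos hA)

theorem gcd_reducedWeight [Nonempty ι] (hA : ∀ i, 0 < A i) :
    univ.gcd (fun i => (reducedWeight A i : ℤ)) = 1 := by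
  set t := (univ.gcd fun i => (reducedWeight A i : ℤ)).natAbs with ht
  have hmul (i : ι) : A i * t ∣ univ.lcm A :=
    mul_reducedWeight A i ▸ mul_dvd_mul_left _
      (Int.natCast_dvd_natCast.1 (Int.natAbs_dvd.2 (Finset.gcd_dvd (mem_univ i))))
  have ht_dvd : t ∣ univ.lcm A := (dvd_mul_left _ _).trans (hmul (Classical.arbitrary ι))
  have hlcm : univ.lcm A ∣ univ.lcm A / t :=
    Finset.lcm_dvd fun i _ => Nat.dvd_div_of_mul_dvd (mul_comm t (A i) ▸ hmul i)
  have ht_one : t = 1 := Nat.dvd_one.1 <| Nat.dvd_of_mul_dvd_mul_left (lcm_pos_of_pos hA) <| by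
    rw [mul_one, mul_comm]
    exact Nat.mul_dvd_of_dvd_div ht_dvd hlcm
  rw [← Finset.normalize_gcd, normalize_eq_one, Int.isUnit_iff_natAbs_eq, ← ht, ht_one]

theorem prod_mul_prod_reducedWeight (A : ι → ℕ) :
    (∏ i, A i) * ∏ i, reducedWeight A i = univ.lcm A ^ Fintype.card ι := by
  simp only [← prod_mul_distrib, mul_reducedWeight, prod_const, card_univ]

end Weights

/-- `h` is the family of vertices of `g • Δ*`, where `Δ` is the simplex with vertices `v`: the point
`h i` is opposite to the facet dual to `v i`, and `A i` is its lattice distance from that facet. -/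
structure IsScaledDual {d : ℕ} (g : ℕ) (A : Fin (d + 1) → ℕ) (v h : Fin (d + 1) → Fin d → ℤ) :
    Prop where
  pos : ∀ i, 0 < A i
  dotProduct_eq : ∀ i j, h i ⬝ᵥ v j = (if i = j then (A i : ℤ) else 0) - g

namespace IsScaledDual

variable {d g : ℕ} {A : Fin (d + 1) → ℕ} {v h : Fin (d + 1) → Fin d → ℤ}

theorem symm (H : IsScaledDual g A v h) : IsScaledDual g A h v where
  pos := H.pos
  dotProduct_eq i j := by
    rw [dotProduct_comm, H.dotProduct_eq]
    split_ifs with h₁ h₂ h₂ <;> simp_all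

theorem homogenization_mul (H : IsScaledDual g A v h) :
    homogenization (fun _ => (g : ℤ)) h * (homogenization 1 v)ᵀ =
      diagonal fun i => (A i : ℤ) := by
  ext i j
  rw [homogenization_mul_transpose, H.dotProduct_eq, diagonal_apply, Pi.one_apply, mul_one,
    add_sub_cancel]

theorem det_mul_det (H : IsScaledDual g A v h) :
    (homogenization (fun _ => (g : ℤ)) h).det * (homogenization 1 v).det = ∏ i, (A i : ℤ) := by
  rw [← det_transpose (homogenization 1 v), ← det_mul, H.homogenization_mul, det_diagonal]

theorem vecMul_homogenization_eq (H : IsScaledDual g A v h) :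
    (fun i => (reducedWeight A i : ℤ)) ᵥ* homogenization (fun _ => (g : ℤ)) h =
      Fin.cons ((univ.lcm A : ℕ) : ℤ) 0 := by
  have hdet : (homogenization 1 v).det ≠ 0 := by
    refine right_ne_zero_of_mul (a := (homogenization (fun _ => (g : ℤ)) h).det) ?_
    rw [H.det_mul_det]
    exact prod_ne_zero_iff.2 fun i _ => by exact_mod_cast (H.pos i).ne'
  have hcons (c : ℤ) (j : Fin (d + 1)) :
      (homogenization 1 v *ᵥ (Fin.cons c 0 : Fin (d + 1) → ℤ)) j = c := by
    simp [homogenization, mulVec, dotProduct, Fin.sum_univ_succ]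
  refine mulVec_injective_of_det_ne_zero hdet (funext fun j => ?_)
  rw [hcons, ← vecMul_transpose, vecMul_vecMul, H.homogenization_mul, vecMul_diagonal, mul_comm]
  exact_mod_cast mul_reducedWeight A j

theorem mul_sum_reducedWeight (H : IsScaledDual g A v h) :
    g * ∑ i, reducedWeight A i = univ.lcm A := by
  have h₀ := congrFun H.vecMul_homogenization_eq 0
  rw [vecMul_homogenization, Fin.cons_zero, Fin.cons_zero, dotProduct, ← sum_mul, mul_comm] at h₀
  exact_mod_cast h₀

theorem reducedWeight_vecMul (H : IsScaledDual g A v h) :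
    (fun i => (reducedWeight A i : ℤ)) ᵥ* of h = 0 := by
  have htail := congrArg Fin.tail H.vecMul_homogenization_eq
  rwa [vecMul_homogenization, Fin.tail_cons, Fin.tail_cons] at htail

theorem natAbs_det_homogenization_const (H : IsScaledDual g A v h) (n : ℕ) :
    (homogenization (fun _ => (n : ℤ)) h).det.natAbs =
      n * (∑ i, reducedWeight A i) * multOf h := by
  rw [natAbs_det_homogenization H.reducedWeight_vecMul (gcd_reducedWeight H.pos)]
  congr 1
  rw [dotProduct, ← sum_mul, mul_comm]
  exact_mod_cast Int.natAbs_natCast _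

theorem multOf_mul_multOf (H : IsScaledDual g A v h) :
    multOf v * multOf h * (univ.lcm A) ^ 2 = g * ∏ i, A i := by
  have hdet := congrArg Int.natAbs H.det_mul_det
  rw [Int.natAbs_mul, H.natAbs_det_homogenization_const,
    show (1 : Fin (d + 1) → ℤ) = fun _ => ((1 : ℕ) : ℤ) from rfl,
    H.symm.natAbs_det_homogenization_const, ← Nat.cast_prod, Int.natAbs_natCast] at hdet
  rw [← hdet, ← H.mul_sum_reducedWeight]
  ring

end IsScaledDual

section CongruenceSublattice

variable {d : ℕ}

/-- The lattice of integral points pairing with `v` to a multiple of `n`. -/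
def congruenceSublattice (v : Fin d → ℤ) (n : ℕ) : AddSubgroup (Fin d → ℤ) :=
  (AddSubgroup.zmultiples (n : ℤ)).comap (dotProductEquiv ℤ (Fin d) v).toAddMonoidHom

theorem mem_congruenceSublattice {v x : Fin d → ℤ} {n : ℕ} :
    x ∈ congruenceSublattice v n ↔ (n : ℤ) ∣ v ⬝ᵥ x :=
  Int.mem_zmultiples_iff

theorem IsPrimitive.exists_dotProduct_eq_one {v : Fin d → ℤ} (hv : IsPrimitive v) :
    ∃ x, v ⬝ᵥ x = 1 := by
  obtain ⟨x, hx⟩ := Finset.gcd_eq_sum_mul univ v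
  exact ⟨x, hx.symm.trans hv⟩

theorem index_congruenceSublattice {v : Fin d → ℤ} (hv : IsPrimitive v) (n : ℕ) :
    (congruenceSublattice v n).index = n := by
  obtain ⟨x, hx⟩ := hv.exists_dotProduct_eq_one
  have hsurj : Function.Surjective (dotProductEquiv ℤ (Fin d) v).toAddMonoidHom := fun a =>
    ⟨a • x, by
      change v ⬝ᵥ a • x = a
      rw [dotProduct_smul, hx, smul_eq_mul, mul_one]⟩
  rw [congruenceSublattice, AddSubgroup.index_comap_of_surjective _ hsurj, Int.index_zmultiples,
    Int.natAbs_natCast]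

variable {v : Fin d → ℤ} {h : Fin (d + 1) → Fin d → ℤ} {n : ℕ}

theorem closure_le_congruenceSublattice (hn : ∀ i, (n : ℤ) ∣ v ⬝ᵥ h i) :
    AddSubgroup.closure (Set.range h) ≤ congruenceSublattice v n :=
  (AddSubgroup.closure_le _).2 <| Set.range_subset_iff.2 fun i => mem_congruenceSublattice.2 (hn i)

theorem dvd_multOf (hv : IsPrimitive v) (hn : ∀ i, (n : ℤ) ∣ v ⬝ᵥ h i) : n ∣ multOf h :=
  index_congruenceSublattice hv n ▸ AddSubgroup.index_dvd_of_le (closure_le_congruenceSublattice hn)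

theorem closure_eq_congruenceSublattice (hv : IsPrimitive v) (hn : ∀ i, (n : ℤ) ∣ v ⬝ᵥ h i)
    (h_mult : multOf h = n) (hn₀ : n ≠ 0) :
    AddSubgroup.closure (Set.range h) = congruenceSublattice v n := by
  have hle := closure_le_congruenceSublattice hn
  have hindex := AddSubgroup.relIndex_mul_index hle
  rw [index_congruenceSublattice hv, ← multOf, h_mult] at hindex
  exact hle.antisymm (AddSubgroup.relIndex_eq_one.1 (Nat.mul_eq_right hn₀ |>.1 hindex))

end CongruenceSublattice

namespace IsScaledDual

variable {d g : ℕ} {A : Fin (d + 1) → ℕ} {v h : Fin (d + 1) → Fin d → ℤ}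

theorem dvd_dotProduct (H : IsScaledDual g A v h) {j : Fin (d + 1)} (hj : g ∣ A j)
    (i : Fin (d + 1)) : (g : ℤ) ∣ v j ⬝ᵥ h i := by
  rw [H.symm.dotProduct_eq]
  refine dvd_sub ?_ dvd_rfl
  split_ifs
  · exact Int.natCast_dvd_natCast.2 hj
  · exact dvd_zero _

theorem exists_dvd (H : IsScaledDual g A v h) (hg : g = 1 ∨ g.Prime) : ∃ j, g ∣ A j := by
  rcases hg with rfl | hg
  · exact ⟨0, one_dvd _⟩
  have hprod : g ∣ ∏ j, A j :=
    (Dvd.intro _ H.mul_sum_reducedWeight).trans (Finset.lcm_dvd fun j => dvd_prod_of_mem A)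
  obtain ⟨j, -, hj⟩ := hg.prime.exists_mem_finset_dvd hprod
  exact ⟨j, hj⟩

theorem dvd_multOf (H : IsScaledDual g A v h) (hv : ∀ i, IsPrimitive (v i))
    (hg : g = 1 ∨ g.Prime) : g ∣ multOf h := by
  obtain ⟨j, hj⟩ := H.exists_dvd hg
  exact _root_.dvd_multOf (hv j) (H.dvd_dotProduct hj)

theorem multOf_pos (H : IsScaledDual g A v h) : 0 < multOf v := by
  have hg : 0 < g :=
    Nat.pos_of_mul_pos_right (H.mul_sum_reducedWeight.symm ▸ lcm_pos_of_pos H.pos)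
  have hpos : 0 < g * ∏ i, A i := mul_pos hg (prod_pos fun i _ => H.pos i)
  rw [← H.multOf_mul_multOf] at hpos
  exact Nat.pos_of_mul_pos_right (Nat.pos_of_mul_pos_right hpos)

theorem reducedWeight_dvd (H : IsScaledDual g A v h) (i : Fin (d + 1)) :
    reducedWeight A i ∣ g * ∑ j, reducedWeight A j :=
  H.mul_sum_reducedWeight ▸ Dvd.intro_left _ (mul_reducedWeight A i)

theorem multOf_mul_multOf_mul_prod {d : ℕ} {A : Fin (d + 2) → ℕ}
    {v h : Fin (d + 2) → Fin (d + 1) → ℤ} (H : IsScaledDual g A v h) :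
    multOf v * multOf h * ∏ i, reducedWeight A i = g * univ.lcm A ^ d := by
  refine Nat.eq_of_mul_eq_mul_right (pow_pos (lcm_pos_of_pos H.pos) 2) ?_
  rw [mul_right_comm, H.multOf_mul_multOf, mul_assoc, prod_mul_prod_reducedWeight,
    Fintype.card_fin]
  ring

end IsScaledDual

section WeightInequality

/-- The difference of the two sides is `(x - m) * (d ^ 2 * m - x)`. -/
theorem add_mul_sq_lt_of_lt_of_lt {d m x : ℕ} (hmx : m < x) (hxm : x < d ^ 2 * m) :
    (x + d * m) ^ 2 < (d + 1) ^ 2 * (x * m) := by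
  zify at *
  nlinarith [mul_pos (sub_pos.2 hmx) (sub_pos.2 hxm)]

theorem le_prod_of_pos {ι : Type*} [Fintype ι] {r : ι → ℕ} (hr : ∀ k, 0 < r k) (j : ι) :
    r j ≤ ∏ k, r k :=
  Nat.le_of_dvd (prod_pos fun k _ => hr k) (dvd_prod_of_mem r (mem_univ j))

theorem eq_one_or_add_sum_sq_lt {d : ℕ} (hd : 1 < d) {r : Fin d → ℕ} (hr : ∀ k, 0 < r k)
    {j : Fin d} (hj : ∀ k, r k ≤ r j) {x : ℕ} (hjx : r j ≤ x) (hx : x < d ^ 2 * r j) :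
    (x = 1 ∧ ∀ k, r k = 1) ∨ (x + ∑ k, r k) ^ 2 < (d + 1) ^ 2 * (x * ∏ k, r k) := by
  have hsum : ∑ k, r k ≤ d * r j := by
    simpa using Finset.sum_le_card_nsmul univ r (r j) fun k _ => hj k
  have hprod : r j ≤ ∏ k, r k := le_prod_of_pos hr j
  rcases hjx.lt_or_eq with hlt | rfl
  · right
    calc (x + ∑ k, r k) ^ 2 ≤ (x + d * r j) ^ 2 := by gcongr
      _ < (d + 1) ^ 2 * (x * r j) := add_mul_sq_lt_of_lt_of_lt hlt hx
      _ ≤ (d + 1) ^ 2 * (x * ∏ k, r k) := by gcongr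
  by_cases hconst : ∀ k, r k = r j
  · rcases (Nat.succ_le_of_lt (hr j)).lt_or_eq with hone | hone
    · right
      have hpow : r j < r j ^ d := lt_self_pow₀ hone hd
      have : 0 < r j := hr j
      calc (r j + ∑ k, r k) ^ 2 = (d + 1) ^ 2 * (r j * r j) := by
            simp only [hconst, sum_const, card_univ, Fintype.card_fin, smul_eq_mul]
            ring
        _ < (d + 1) ^ 2 * (r j * r j ^ d) := by gcongr
        _ = (d + 1) ^ 2 * (r j * ∏ k, r k) := by
            simp only [hconst, prod_const, card_univ, Fintype.card_fin]
    · exact .inl ⟨hone.symm, fun k => (hconst k).trans hone.symm⟩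
  · right
    push Not at hconst
    obtain ⟨k, hk⟩ := hconst
    have hsum_lt : ∑ k, r k < d * r j := by
      simpa using Finset.sum_lt_sum (fun k _ => hj k) ⟨k, mem_univ k, (hj k).lt_of_ne hk⟩
    calc (r j + ∑ k, r k) ^ 2 < (r j + d * r j) ^ 2 := by gcongr
      _ = (d + 1) ^ 2 * (r j * r j) := by ring
      _ ≤ (d + 1) ^ 2 * (r j * ∏ k, r k) := by gcongr

/- A largest entry `x` of `q` divides `g` times the sum of the other entries, hence is at most
`g * d * m`, where `m` is the largest of the others. -/
theorem eq_one_or_sum_sq_lt {d g : ℕ} (hg : 0 < g) (hgd : g < d) {q : Fin (d + 1) → ℕ}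
    (hq : ∀ i, 0 < q i) (hdvd : ∀ i, q i ∣ g * ∑ j, q j) :
    (∀ i, q i = 1) ∨ (∑ i, q i) ^ 2 < (d + 1) ^ 2 * ∏ i, q i := by
  obtain ⟨i, hi⟩ := Finite.exists_max q
  have : Nonempty (Fin d) := ⟨⟨0, hg.trans hgd⟩⟩
  obtain ⟨j, hj⟩ := Finite.exists_max fun k => q (i.succAbove k)
  have hsum : ∑ k, q (i.succAbove k) ≤ d * q (i.succAbove j) := by
    simpa using Finset.sum_le_card_nsmul univ _ _ fun k _ => hj k
  have hsum_pos : 0 < ∑ k, q (i.succAbove k) := sum_pos (fun k _ => hq _) univ_nonempty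
  have hdvd_sum : q i ∣ g * ∑ k, q (i.succAbove k) := by
    have := hdvd i
    rwa [Fin.sum_univ_succAbove _ i, mul_add, Nat.dvd_add_right (dvd_mul_left _ _)] at this
  have hlt : q i < d ^ 2 * q (i.succAbove j) :=
    calc q i ≤ g * ∑ k, q (i.succAbove k) := Nat.le_of_dvd (mul_pos hg hsum_pos) hdvd_sum
      _ < d * ∑ k, q (i.succAbove k) := by gcongr
      _ ≤ d * (d * q (i.succAbove j)) := by gcongr
      _ = d ^ 2 * q (i.succAbove j) := by ring
  rw [Fin.forall_iff_succAbove i, Fin.sum_univ_succAbove _ i, Fin.prod_univ_succAbove _ i]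
  exact eq_one_or_add_sum_sq_lt (by omega) (fun k => hq _) hj (hi _) hlt

end WeightInequality

namespace IsScaledDual

variable {g : ℕ} {A : Fin 4 → ℕ} {v h : Fin 4 → Fin 3 → ℤ}

theorem multOf_bound (H : IsScaledDual g A v h) (hv : ∀ i, IsPrimitive (v i))
    (hg : g = 1 ∨ g = 2) :
    multOf v ≤ 16 * g ^ 2 ∧
      (multOf v = 16 * g ^ 2 → (∀ i, reducedWeight A i = 1) ∧ multOf h = g) := by
  have hg_pos : 0 < g := by omega
  set p := ∏ i, reducedWeight A i
  obtain ⟨k, hk⟩ := H.dvd_multOf hv (hg.imp_right (by rintro rfl; exact Nat.prime_two))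
  have hk_pos : 0 < k := Nat.pos_of_mul_pos_left (hk ▸ H.symm.multOf_pos)
  have hmul : multOf v * k * p = g ^ 2 * (∑ i, reducedWeight A i) ^ 2 := by
    refine Nat.eq_of_mul_eq_mul_left hg_pos ?_
    calc g * (multOf v * k * p) = multOf v * multOf h * p := by rw [hk]; ring
      _ = g * (g ^ 2 * (∑ i, reducedWeight A i) ^ 2) := by
        rw [H.multOf_mul_multOf_mul_prod, ← H.mul_sum_reducedWeight, mul_pow]
  rcases eq_one_or_sum_sq_lt hg_pos (by omega : g < 3) (reducedWeight_pos H.pos)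
    H.reducedWeight_dvd with hone | hlt
  · have hmul_k : multOf v * k = 16 * g ^ 2 := by
      simpa [p, hone, mul_comm] using hmul
    refine ⟨hmul_k ▸ Nat.le_mul_of_pos_right _ hk_pos, fun hv_eq => ⟨hone, ?_⟩⟩
    rw [← hv_eq, Nat.mul_eq_left H.multOf_pos.ne'] at hmul_k
    rw [hk, hmul_k, mul_one]
  · have hlt_bound : multOf v < 16 * g ^ 2 := by
      refine Nat.lt_of_mul_lt_mul_right (a := p) ?_
      calc multOf v * p ≤ multOf v * k * p := by gcongr; exact Nat.le_mul_of_pos_right _ hk_pos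
        _ = g ^ 2 * (∑ i, reducedWeight A i) ^ 2 := hmul
        _ < g ^ 2 * ((3 + 1) ^ 2 * p) := by gcongr
        _ = 16 * g ^ 2 * p := by ring
    exact ⟨hlt_bound.le, fun hv_eq => absurd hv_eq hlt_bound.ne⟩

end IsScaledDual

section ExtremalSimplex

/-- The vertices of the simplex of Gorenstein index `g` attaining the bound, as rows. -/
def extremalVertices (g : ℕ) : Fin 4 → Fin 3 → ℤ :=
  ![![1, 0, 0],
    ![4 * (g : ℤ) - 3, 4 * (g : ℤ), 0],
    ![4 * (g : ℤ) - 3, 0, 4 * (g : ℤ)],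
    ![5 - 8 * (g : ℤ), -(4 * (g : ℤ)), -(4 * (g : ℤ))]]

theorem multOf_extremalVertices (g : ℕ) : multOf (extremalVertices g) = 16 * g ^ 2 := by
  have hsum : (1 : Fin 4 → ℤ) ᵥ* of (extremalVertices g) = 0 := by
    ext j
    fin_cases j <;> simp [extremalVertices, vecMul, dotProduct, Fin.sum_univ_succ]
    ring
  have hone : (1 : Fin 4 → ℤ) ⬝ᵥ Pi.single 0 1 = 1 := by simp
  have hdet : (homogenization (Pi.single 0 1) (extremalVertices g)).det =
      -((16 * g ^ 2 : ℕ) : ℤ) := by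
    simp [homogenization, extremalVertices, det_succ_row_zero, Fin.sum_univ_succ, Fin.succAbove]
    ring
  rw [← natAbs_det_homogenization_of_dotProduct_eq_one hsum hone, hdet, Int.natAbs_neg,
    Int.natAbs_natCast]

end ExtremalSimplex

theorem exists_eq_add_ite_of_sum_eq_one :
    ∀ c : Fin 4 → ZMod 2, ∑ k, c k = 1 → ∃ i e, ∀ k, c k = e + if k = i then 1 else 0 := by
  decide

/- Modulo `2`, one of the coefficients `c i` differs from all the others; as `∑ k, h k = 0`, only
the term `h i` survives in `∑ k, c k • h k`. -/
theorem exists_two_smul_eq_of_odd_sum {d : ℕ} {h : Fin 4 → Fin d → ℤ} (h_sum : ∑ k, h k = 0)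
    {c : Fin 4 → ℤ} {x : Fin d → ℤ} (hc : c ᵥ* of h = (2 : ℤ) • x) (hc_odd : Odd (∑ k, c k)) :
    ∃ i t, (2 : ℤ) • t = h i := by
  obtain ⟨i, e, hie⟩ := exists_eq_add_ite_of_sum_eq_one (fun k => (c k : ZMod 2)) (by
    rw [← Int.cast_sum]
    exact hc_odd.intCast_zmod_two)
  have hdvd (j : Fin d) : (2 : ℤ) ∣ h i j := by
    have h_sum_j : ∑ k, (h k j : ZMod 2) = 0 := by
      simpa using congrArg (Int.cast : ℤ → ZMod 2) (congrFun h_sum j)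
    have hc_j : ∑ k, (c k : ZMod 2) * (h k j : ZMod 2) = 0 := by
      simpa [vecMul, dotProduct, CharTwo.two_eq_zero] using
        congrArg (Int.cast : ℤ → ZMod 2) (congrFun hc j)
    refine (ZMod.intCast_zmod_eq_zero_iff_dvd (h i j) 2).1 ?_
    simpa [hie, add_mul, sum_add_distrib, ← mul_sum, h_sum_j] using hc_j
  choose t ht using hdvd
  exact ⟨i, t, funext fun j => (ht j).symm⟩

namespace IsScaledDual

variable {g : ℕ} {v h : Fin 4 → Fin 3 → ℤ}

theorem isIsomorphicTo_extremalVertices_of_smul_eq (H : IsScaledDual g (fun _ => 4 * g) v h)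
    (hg : g ≠ 0) (hv : multOf v = 16 * g ^ 2) {σ : Equiv.Perm (Fin 4)} {t : Fin 3 → ℤ}
    (ht : (g : ℤ) • t = h (σ 0) + (2 : ℤ) • h (σ 3)) :
    IsIsomorphicTo v (extremalVertices g) := by
  have h_dot (i j : Fin 4) : h (σ i) ⬝ᵥ v (σ j) = (if i = j then 4 * (g : ℤ) else 0) - g := by
    simp [H.dotProduct_eq]
  have ht_dot (j : Fin 4) :
      t ⬝ᵥ v (σ j) = 4 * (if 0 = j then 1 else 0) + 8 * (if 3 = j then 1 else 0) - 3 := by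
    have hmul := congrArg (· ⬝ᵥ v (σ j)) ht
    simp only [smul_dotProduct, add_dotProduct, h_dot, smul_eq_mul] at hmul
    refine mul_left_cancel₀ (Nat.cast_ne_zero.2 hg : (g : ℤ) ≠ 0) (hmul.trans ?_)
    split_ifs <;> ring
  refine isIsomorphicTo_of_multOf_eq
    (of ![t - h (σ 0) - (3 : ℤ) • h (σ 3), h (σ 1) - h (σ 3), h (σ 2) - h (σ 3)]) σ
    (fun j => ?_) (hv.trans (multOf_extremalVertices g).symm) (by simp [hv, hg])
  simp only [cons_mulVec, empty_mulVec, sub_dotProduct, smul_dotProduct, h_dot, ht_dot,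
    smul_eq_mul]
  fin_cases j <;> simp [extremalVertices] <;> omega

/- Twice a vector `x` pairing to `1` with `v 0` is of the form `∑ k, c k • h k`, and pairing this
with `v 0` shows that `∑ k, c k` is odd. -/
theorem exists_two_smul_eq (H : IsScaledDual 2 (fun _ => 8) v h) (hv : IsPrimitive (v 0))
    (h_sum : ∑ k, h k = 0) (h_mult : multOf h = 2) : ∃ i t, (2 : ℤ) • t = h i := by
  obtain ⟨x, hx⟩ := hv.exists_dotProduct_eq_one
  have hclosure := closure_eq_congruenceSublattice hv
    (H.dvd_dotProduct (j := 0) (by decide : 2 ∣ 8)) h_mult two_ne_zero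
  obtain ⟨c, hc⟩ : ∃ c, c ᵥ* of h = (2 : ℤ) • x := by
    refine (mem_closure_range_row_iff (of h) _).1 ?_
    change _ ∈ AddSubgroup.closure (Set.range h)
    rw [hclosure, mem_congruenceSublattice, dotProduct_smul]
    exact dvd_mul_right _ _
  have hc_sum : ∑ k, c k = 4 * c 0 - 1 := by
    have hrow : of h *ᵥ v 0 = fun k => (if k = 0 then 8 else 0) - 2 :=
      funext fun k => H.dotProduct_eq k 0
    have hdot := congrArg (· ⬝ᵥ v 0) hc
    simp only [← dotProduct_mulVec, smul_dotProduct, dotProduct_comm x, hx, hrow] at hdot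
    simp only [dotProduct, Fin.isValue, mul_sub, mul_ite, mul_zero, sum_sub_distrib, sum_ite_eq',
      mem_univ, ↓reduceIte, ← sum_mul, Int.zsmul_eq_mul, mul_one] at hdot
    linarith
  exact exists_two_smul_eq_of_odd_sum h_sum hc (by rw [hc_sum]; exact ⟨2 * c 0 - 1, by ring⟩)

theorem isIsomorphicTo_extremalVertices {A : Fin 4 → ℕ} (H : IsScaledDual g A v h)
    (hv : ∀ i, IsPrimitive (v i)) (hg : g = 1 ∨ g = 2) (hmult : multOf v = 16 * g ^ 2) :
    IsIsomorphicTo v (extremalVertices g) := by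
  obtain ⟨hone, h_mult⟩ := (H.multOf_bound hv hg).2 hmult
  obtain rfl : A = fun _ => 4 * g := by
    ext i
    rw [← mul_one (A i), ← hone i, mul_reducedWeight, ← H.mul_sum_reducedWeight]
    simp [hone, mul_comm]
  rcases hg with rfl | rfl
  · exact H.isIsomorphicTo_extremalVertices_of_smul_eq (σ := 1) one_ne_zero hmult (one_smul ℤ _)
  · have h_sum : ∑ k, of h k = 0 := by
      simpa [hone, vecMul_eq_sum] using H.reducedWeight_vecMul
    obtain ⟨i, t, ht⟩ := H.exists_two_smul_eq (hv 0) h_sum h_mult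
    refine H.isIsomorphicTo_extremalVertices_of_smul_eq (σ := Equiv.swap 0 i) two_ne_zero hmult
      (t := t + h (Equiv.swap 0 i 3)) ?_
    rw [Nat.cast_ofNat, smul_add, ht, Equiv.swap_apply_left]

end IsScaledDual

section DualBody

variable {d : ℕ} {v : Fin (d + 1) → Fin d → ℚ}

theorem mem_dualBody_simplexHull {u : Fin d → ℚ} :
    u ∈ dualBody (simplexHull v) ↔ ∀ j, -1 ≤ u ⬝ᵥ v j := by
  refine ⟨fun hu j => hu _ (subset_convexHull ℚ _ ⟨j, rfl⟩), fun hu x hx => ?_⟩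
  exact convexHull_min (Set.range_subset_iff.2 hu)
    (convex_halfSpace_ge (dotProductEquiv ℚ (Fin d) u).isLinear (-1)) hx

theorem mem_smul_dualBody_simplexHull {c : ℚ} (hc : 0 < c) {x : Fin d → ℚ} :
    x ∈ c • dualBody (simplexHull v) ↔ ∀ j, -c ≤ x ⬝ᵥ v j := by
  rw [Set.mem_smul_set_iff_inv_smul_mem₀ hc.ne', mem_dualBody_simplexHull]
  refine forall_congr' fun j => ?_
  rw [smul_dotProduct, smul_eq_mul, inv_mul_eq_div, le_div_iff₀ hc, neg_one_mul]

theorem affineSpan_range_eq_top (hv : AffineIndependent ℚ v) :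
    affineSpan ℚ (Set.range v) = ⊤ := by
  rw [hv.affineSpan_eq_top_iff_card_eq_finrank_add_one]
  simp

theorem eq_zero_of_dotProduct_eq_zero (hv : AffineIndependent ℚ v) {z : Fin d → ℚ}
    (hz : ∀ j, z ⬝ᵥ v j = 0) : z = 0 := by
  let b : AffineBasis (Fin (d + 1)) ℚ (Fin d → ℚ) := ⟨v, hv, affineSpan_range_eq_top hv⟩
  refine dotProduct_eq_zero z fun x => ?_
  rw [← b.linear_combination_coord_eq_self x, dotProduct_sum]
  exact sum_eq_zero fun j _ => by rw [dotProduct_smul]; exact (hz j).symm ▸ smul_zero _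

variable {w : Fin (d + 1) → ℚ}

/- The `i`-th barycentric coordinate is an affine function with value `w i` at the origin, so that
`u` is its linear part divided by `w i`. -/
theorem exists_dual_vertex (hv : AffineIndependent ℚ v) (hw_sum : ∑ j, w j = 1)
    (hwv : w ᵥ* of v = 0) {i : Fin (d + 1)} (hwi : w i ≠ 0) :
    ∃ u, ∀ j, u ⬝ᵥ v j = (if i = j then (w i)⁻¹ else 0) - 1 := by
  let b : AffineBasis (Fin (d + 1)) ℚ (Fin d → ℚ) := ⟨v, hv, affineSpan_range_eq_top hv⟩
  have horigin : b.coord i 0 = w i := by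
    have hcomb : univ.affineCombination ℚ b w = 0 := by
      rw [affineCombination_eq_linear_combination _ _ _ hw_sum, ← hwv, vecMul_eq_sum]
      rfl
    rw [← hcomb, b.coord_apply_combination_of_mem (mem_univ i) hw_sum]
  obtain ⟨l, hl⟩ := (dotProductEquiv ℚ (Fin d)).surjective (b.coord i).linear
  refine ⟨(w i)⁻¹ • l, fun j => ?_⟩
  have hcoord : l ⬝ᵥ v j = b.coord i (v j) - w i := by
    have := (b.coord i).linearMap_vsub (v j) 0
    rw [← hl, vsub_eq_sub, sub_zero, vsub_eq_sub, horigin] at this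
    exact this
  rw [smul_dotProduct, hcoord, smul_eq_mul, mul_sub, inv_mul_cancel₀ hwi,
    show b.coord i (v j) = if i = j then 1 else 0 from b.coord_apply i j, mul_ite, mul_one,
    mul_zero]

theorem mem_extremePoints_smul_dualBody (hv : AffineIndependent ℚ v) (hw : ∀ j, 0 < w j)
    (hwv : w ᵥ* of v = 0) {c : ℚ} (hc : 0 < c) {x : Fin d → ℚ}
    (hx : x ∈ c • dualBody (simplexHull v)) {i : Fin (d + 1)} (hxi : ∀ j, j ≠ i → x ⬝ᵥ v j = -c) :
    x ∈ (c • dualBody (simplexHull v)).extremePoints ℚ := by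
  refine mem_extremePoints_iff_left.2 ⟨hx, fun y hy z hz ⟨a, b, ha, hb, hab, hyz⟩ => ?_⟩
  rw [mem_smul_dualBody_simplexHull hc] at hy hz
  have hne (j : Fin (d + 1)) (hj : j ≠ i) : (y - x) ⬝ᵥ v j = 0 := by
    have hj_eq := hxi j hj
    rw [← hyz, add_dotProduct, smul_dotProduct, smul_dotProduct, smul_eq_mul, smul_eq_mul] at hj_eq
    have hyj : y ⬝ᵥ v j = -c := by
      have := mul_le_mul_of_nonneg_left (hz j) hb.le
      have : a * (y ⬝ᵥ v j) ≤ a * -c := by linear_combination this + hj_eq + c * hab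
      exact (le_of_mul_le_mul_left this ha).antisymm (hy j)
    rw [sub_dotProduct, hxi j hj, hyj, sub_self]
  have hi : (y - x) ⬝ᵥ v i = 0 := by
    have hsum : w ⬝ᵥ of v *ᵥ (y - x) = 0 := by rw [dotProduct_mulVec, hwv, zero_dotProduct]
    rw [dotProduct, sum_eq_single i] at hsum
    · rw [dotProduct_comm]
      exact (mul_eq_zero.1 hsum).resolve_left (hw i).ne'
    · intro j _ hj
      rw [mulVec, dotProduct_comm]
      exact mul_eq_zero_of_right _ (hne j hj)
    · simp
  refine sub_eq_zero.1 (eq_zero_of_dotProduct_eq_zero hv fun j => ?_)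
  rcases eq_or_ne j i with rfl | hj
  exacts [hi, hne j hj]

end DualBody

theorem IsLatticeSet.exists_toQ_eq {d : ℕ} {S : Set (Fin d → ℚ)} (hS : IsLatticeSet S)
    {x : Fin d → ℚ} (hx : x ∈ S.extremePoints ℚ) : ∃ z, toQ z = x := by
  rw [hS] at hx
  choose z hz using (extremePoints_convexHull_subset hx).2
  exact ⟨z, funext fun j => (hz j).symm⟩

theorem toQ_dotProduct_toQ {d : ℕ} (x y : Fin d → ℤ) :
    toQ x ⬝ᵥ toQ y = ((x ⬝ᵥ y : ℤ) : ℚ) := by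
  simp [toQ, dotProduct]

namespace IsFanoSimplex

variable {d g : ℕ} {v : Fin (d + 1) → Fin d → ℤ}

theorem exists_lattice_dual_vertices (hF : IsFanoSimplex v) (hg : 0 < g)
    (hL : IsLatticeSet ((g : ℚ) • dualBody (simplexHull fun i => toQ (v i)))) :
    ∃ (w : Fin (d + 1) → ℚ) (h : Fin (d + 1) → Fin d → ℤ), (∀ i, 0 < w i) ∧
      ∀ i j, ((h i ⬝ᵥ v j : ℤ) : ℚ) = (if i = j then g / w i else 0) - g := by
  obtain ⟨hv, -, w, hw, hw_sum, hwv⟩ := hF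
  have hwv' : w ᵥ* of (fun i => toQ (v i)) = 0 := funext hwv
  have hgq : (0 : ℚ) < g := Nat.cast_pos.2 hg
  choose u hu using fun i => exists_dual_vertex hv hw_sum hwv' (hw i).ne'
  have hgu (i j : Fin (d + 1)) :
      (g : ℚ) • u i ⬝ᵥ toQ (v j) = (if i = j then g / w i else 0) - g := by
    rw [smul_dotProduct, hu, smul_eq_mul, mul_sub, mul_one, mul_ite, mul_zero, div_eq_mul_inv]
  have hmem (i : Fin (d + 1)) :
      (g : ℚ) • u i ∈ (g : ℚ) • dualBody (simplexHull fun i => toQ (v i)) := by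
    refine (mem_smul_dualBody_simplexHull hgq).2 fun j => ?_
    have := div_pos hgq (hw i)
    rw [hgu]
    split_ifs <;> linarith
  choose h hh using fun i => hL.exists_toQ_eq <| mem_extremePoints_smul_dualBody hv hw hwv' hgq
    (hmem i) (i := i) fun j hj => by rw [hgu, if_neg hj.symm, zero_sub]
  exact ⟨w, h, hw, fun i j => by rw [← toQ_dotProduct_toQ, hh, hgu]⟩

theorem exists_isScaledDual (hF : IsFanoSimplex v) (hg : 0 < g)
    (hL : IsLatticeSet ((g : ℚ) • dualBody (simplexHull fun i => toQ (v i)))) :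
    ∃ A h, IsScaledDual g A v h := by
  obtain ⟨w, h, hw, hh⟩ := hF.exists_lattice_dual_vertices hg hL
  have hheight (i : Fin (d + 1)) : 0 < h i ⬝ᵥ v i + g := by
    have := div_pos (Nat.cast_pos.2 hg : (0 : ℚ) < g) (hw i)
    have hi := hh i i
    rw [if_pos rfl] at hi
    exact_mod_cast (by linarith : (0 : ℚ) < (h i ⬝ᵥ v i : ℤ) + g)
  refine ⟨fun i => (h i ⬝ᵥ v i + g).toNat, h, fun i => by simpa using hheight i, fun i j => ?_⟩
  rw [Int.toNat_of_nonneg (hheight i).le]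
  split_ifs with hij
  · rw [hij, add_sub_cancel_right]
  · have := hh i j
    rw [if_neg hij] at this
    exact_mod_cast this

end IsFanoSimplex

theorem isLatticeSet_gorensteinIndex_smul {d : ℕ} {v : Fin (d + 1) → Fin d → ℚ}
    (hv : gorensteinIndex v ≠ 0) :
    IsLatticeSet ((gorensteinIndex v : ℚ) • dualBody (simplexHull v)) :=
  (Nat.sInf_mem (Nat.nonempty_of_pos_sInf (Nat.pos_of_ne_zero hv))).2

/-- A Fano simplex of dimension 3 and Gorenstein index `g ∈ {1,2}`
has multiplicity at most `16 g²`, with equality iff it is isomorphic to the simplex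
with vertex matrix having columns (1,0,0), (4g-3,4g,0), (4g-3,0,4g), (5-8g,-4g,-4g). -/
theorem mult_bound_dim3_gorenstein_le2
    (g : ℕ) (hg : g = 1 ∨ g = 2)
    (v : Fin 4 → Fin 3 → ℤ)
    (hFano : IsFanoSimplex v)
    (hGor : gorensteinIndex (fun i => toQ (v i)) = g) :
    multOf v ≤ 16 * g ^ 2 ∧
      (multOf v = 16 * g ^ 2 ↔
        IsIsomorphicTo v
          ![![1, 0, 0],
            ![4 * (g : ℤ) - 3, 4 * (g : ℤ), 0],
            ![4 * (g : ℤ) - 3, 0, 4 * (g : ℤ)],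
            ![5 - 8 * (g : ℤ), -(4 * (g : ℤ)), -(4 * (g : ℤ))]]) := by
  have hg₀ : 0 < g := by omega
  have hlattice : IsLatticeSet ((g : ℚ) • dualBody (simplexHull fun i => toQ (v i))) := by
    have := isLatticeSet_gorensteinIndex_smul (hGor.trans_ne hg₀.ne')
    rwa [hGor] at this
  obtain ⟨A, h, hdual⟩ := hFano.exists_isScaledDual hg₀ hlattice
  exact ⟨(hdual.multOf_bound hFano.2.1 hg).1, hdual.isIsomorphicTo_extremalVertices hFano.2.1 hg,
    fun hiso => hiso.multOf_eq.trans (multOf_extremalVertices g)⟩
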